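/- Let F be a Minkowski norm on ℝⁿ, let Ω ⊆ ℝⁿ be open, let p > 1, and let u_p ∈ C¹(Ω) be a weak solution of div(F(∇u)^{p−1} F_ξ(∇u)) = F(∇u)^p in Ω. Then u_p minimizes the functional J^p: for every precompact set K ⊂ Ω and every locally Lipschitz φ with φ = u_p on Ω∖K one has ∫_K ((1/p)·F(∇u_p)^p + u_p·F(∇u_p)^p) dx ≤ ∫_K ((1/p)·F(∇φ)^p + φ·F(∇u_p)^p) dx. -/

import Mathlib

open MeasureTheory Filter Topology Metric Set
open scoped RealInnerProductSpace NNReal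

noncomputable section

abbrev En (n : ℕ) := EuclideanSpace ℝ (Fin n)

/-- A Minkowski norm on ℝⁿ: a norm (convex, even, 1-homogeneous, positive away from 0)
which is smooth away from the origin and whose Hessian of `F²/2` is positive definite
on `ℝⁿ \ {0}`. -/
structure MinkowskiNorm (n : ℕ) where
  F : En n → ℝ
  convexOn : ConvexOn ℝ Set.univ F
  even : ∀ ξ, F (-ξ) = F ξ
  homog : ∀ c : ℝ, 0 ≤ c → ∀ ξ, F (c • ξ) = c * F ξ
  pos : ∀ ξ : En n, ξ ≠ 0 → 0 < F ξ
  smooth : ContDiffOn ℝ (⊤ : ℕ∞) F {(0 : En n)}ᶜ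
  elliptic : ∀ ξ : En n, ξ ≠ 0 → ∀ v : En n, v ≠ 0 →
    0 < fderiv ℝ (fun x => fderiv ℝ (fun y => F y ^ 2 / 2) x) ξ v v

/-- Locally Lipschitz on a set (i.e. `C^{0,1}_loc`). -/
def LocLipOn {n : ℕ} (f : En n → ℝ) (s : Set (En n)) : Prop :=
  ∀ x ∈ s, ∃ (K : ℝ≥0) (t : Set (En n)), t ∈ nhdsWithin x s ∧ LipschitzOnWith K f t

/-- Weak solution of `div(F_ξ(∇u)) = F(∇u)` in `Ω` in the sense of Huisken–Ilmanen's
minimization principle. -/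
def IsWeakSolIAMCF {n : ℕ} (N : MinkowskiNorm n) (Ω : Set (En n)) (u : En n → ℝ) : Prop :=
  LocLipOn u Ω ∧
  ∀ K : Set (En n), IsCompact (closure K) → closure K ⊆ Ω →
    ∀ φ : En n → ℝ, LocLipOn φ Ω → (∀ x ∈ Ω \ K, φ x = u x) →
      (∫ x in K, (N.F (gradient u x) + u x * N.F (gradient u x))) ≤
        ∫ x in K, (N.F (gradient φ x) + φ x * N.F (gradient u x))

/-- Weak subsolution: the minimization inequality holds for competitors `φ ≤ u`. -/
def IsWeakSubSolIAMCF {n : ℕ} (N : MinkowskiNorm n) (Ω : Set (En n)) (u : En n → ℝ) : Prop :=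
  LocLipOn u Ω ∧
  ∀ K : Set (En n), IsCompact (closure K) → closure K ⊆ Ω →
    ∀ φ : En n → ℝ, LocLipOn φ Ω → (∀ x ∈ Ω \ K, φ x = u x) → (∀ x ∈ Ω, φ x ≤ u x) →
      (∫ x in K, (N.F (gradient u x) + u x * N.F (gradient u x))) ≤
        ∫ x in K, (N.F (gradient φ x) + φ x * N.F (gradient u x))

/-- Weak supersolution: the minimization inequality holds for competitors `φ ≥ u`. -/
def IsWeakSuperSolIAMCF {n : ℕ} (N : MinkowskiNorm n) (Ω : Set (En n)) (u : En n → ℝ) : Prop :=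
  LocLipOn u Ω ∧
  ∀ K : Set (En n), IsCompact (closure K) → closure K ⊆ Ω →
    ∀ φ : En n → ℝ, LocLipOn φ Ω → (∀ x ∈ Ω \ K, φ x = u x) → (∀ x ∈ Ω, u x ≤ φ x) →
      (∫ x in K, (N.F (gradient u x) + u x * N.F (gradient u x))) ≤
        ∫ x in K, (N.F (gradient φ x) + φ x * N.F (gradient u x))

/-- A smooth compactly supported test function on `Ω`. -/
def IsTestFun {n : ℕ} (Ω : Set (En n)) (ψ : En n → ℝ) : Prop :=
  ContDiff ℝ (⊤ : ℕ∞) ψ ∧ HasCompactSupport ψ ∧ tsupport ψ ⊆ Ω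

/-- Weak solution of the Finsler `p`-Laplace equation `div(F(∇v)^{p-1} F_ξ(∇v)) = 0` in `Ω`. -/
def IsWeakPHarmonic {n : ℕ} (N : MinkowskiNorm n) (Ω : Set (En n)) (p : ℝ)
    (v : En n → ℝ) : Prop :=
  ∀ ψ : En n → ℝ, IsTestFun Ω ψ →
    (∫ x in Ω, N.F (gradient v x) ^ (p - 1) *
      ⟪gradient N.F (gradient v x), gradient ψ x⟫) = 0

/-- Weak solution of `div(F(∇u)^{p-1} F_ξ(∇u)) = F(∇u)^p` in `Ω`. -/
def IsWeakPSol {n : ℕ} (N : MinkowskiNorm n) (Ω : Set (En n)) (p : ℝ)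
    (u : En n → ℝ) : Prop :=
  ∀ ψ : En n → ℝ, IsTestFun Ω ψ →
    (∫ x in Ω, N.F (gradient u x) ^ (p - 1) *
      ⟪gradient N.F (gradient u x), gradient ψ x⟫) =
      - ∫ x in Ω, N.F (gradient u x) ^ p * ψ x

/-- The polar (dual) norm `F^o(x) = sup_{ξ ≠ 0} ⟨ξ, x⟩ / F(ξ)`. -/
def polarF {n : ℕ} (N : MinkowskiNorm n) (x : En n) : ℝ :=
  sSup {c : ℝ | ∃ ξ : En n, ξ ≠ 0 ∧ c = ⟪ξ, x⟫ / N.F ξ}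

/-- The Wulff shape of radius `r` centered at `x₀`: `{x : F^o(x - x₀) < r}`. -/
def Wulff {n : ℕ} (N : MinkowskiNorm n) (r : ℝ) (x₀ : En n) : Set (En n) :=
  {x | polarF N (x - x₀) < r}

/-- `Ω` is an open set with smooth boundary: it is a smooth sublevel set of a smooth
function with nonvanishing gradient on the boundary. -/
def HasSmoothBoundary {n : ℕ} (Ω : Set (En n)) : Prop :=
  ∃ f : En n → ℝ, ContDiff ℝ (⊤ : ℕ∞) f ∧ Ω = {x | f x < 0} ∧
    ∀ x ∈ frontier Ω, fderiv ℝ f x ≠ 0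

/-- `C¹` on `s` with locally Hölder continuous gradient (i.e. `C^{1,α}_loc`). -/
def C1LocHolderOn {n : ℕ} (v : En n → ℝ) (s : Set (En n)) : Prop :=
  ContDiffOn ℝ 1 v s ∧
  ∀ x ∈ s, ∃ (α C : ℝ≥0), 0 < α ∧ (α : ℝ) ≤ 1 ∧
    ∃ t ∈ nhdsWithin x s, HolderOnWith C α (fun y => gradient v y) t

/-- Divergence of a vector field on `ℝⁿ`. -/
def divg {n : ℕ} (V : En n → En n) (x : En n) : ℝ :=
  ∑ i : Fin n, fderiv ℝ V x (EuclideanSpace.single i 1) i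

/-!
The function `G ξ = F(ξ)^p / p` is convex with gradient `F(ξ)^(p-1) F_ξ(ξ)`, also at `ξ = 0`, so
`u` solves `div(∇G(∇u)) = b` with `b = F(∇u)^p`. The difference `w = φ - u`, extended by zero, is
Lipschitz with compact support in `Ω`; by mollification it is an admissible test function, which
gives `∫_K ⟪∇G(∇u), ∇w⟫ + b w = 0`. The boundary of `K` may have positive measure, but `∇w = 0`
almost everywhere on `{w = 0}`. Adding this identity to the integral over `K` of the tangent
inequality `G(∇u) + ⟪∇G(∇u), ∇φ - ∇u⟫ ≤ G(∇φ)` yields the claim.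
-/

section LocallyLipschitz

lemma exists_lipschitzWith_of_hasCompactSupport {X G : Type*} [PseudoMetricSpace X] [ProperSpace X]
    [NormedAddCommGroup G] {f : X → G} (hf : LocallyLipschitz f) (hs : HasCompactSupport f) :
    ∃ L, LipschitzWith L f := by
  obtain ⟨L, hL⟩ := hf.locallyLipschitzOn.exists_lipschitzOnWith_of_compact
    (hs.isCompact.cthickening (r := 1))
  obtain ⟨M, hM⟩ := hs.exists_bound_of_continuous hf.continuous
  have far : ∀ x, ∀ y ∉ cthickening 1 (tsupport f),
      dist (f x) (f y) ≤ M.toNNReal * dist x y := by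
    intro x y hy
    rw [image_eq_zero_of_notMem_tsupport fun h => hy (self_subset_cthickening _ h), dist_zero_right]
    by_cases hx : x ∈ tsupport f
    · have one_le_dist : 1 ≤ dist x y := by
        by_contra! h
        exact hy (mem_cthickening_of_dist_le y x 1 _ hx (by rw [dist_comm]; exact h.le))
      calc ‖f x‖ ≤ M.toNNReal * 1 := by rw [mul_one]; exact (hM x).trans M.le_coe_toNNReal
        _ ≤ M.toNNReal * dist x y := by gcongr
    · rw [image_eq_zero_of_notMem_tsupport hx, norm_zero]
      positivity
  refine ⟨max L M.toNNReal, .of_dist_le_mul fun x y => ?_⟩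
  have mul_le_max (A : ℝ≥0) (hA : A ≤ max L M.toNNReal) :
      A * dist x y ≤ (max L M.toNNReal : ℝ≥0) * dist x y := by gcongr
  by_cases hy : y ∈ cthickening 1 (tsupport f)
  · by_cases hx : x ∈ cthickening 1 (tsupport f)
    · exact (hL.dist_le_mul x hx y hy).trans (mul_le_max L (le_max_left _ _))
    · rw [dist_comm (f x)]
      exact (far y x hx).trans (by rw [dist_comm y]; exact mul_le_max _ (le_max_right _ _))
  · exact (far x y hy).trans (mul_le_max _ (le_max_right _ _))

lemma locallyLipschitz_of_tsupport_subset {X G : Type*} [PseudoEMetricSpace X]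
    [NormedAddCommGroup G] {f : X → G} {s : Set X} (hs : IsOpen s) (hf : LocallyLipschitzOn s f)
    (hsupp : tsupport f ⊆ s) : LocallyLipschitz f := by
  intro x
  by_cases hx : x ∈ s
  · simpa only [hs.nhdsWithin_eq hx] using hf hx
  · refine ⟨0, (tsupport f)ᶜ, (isClosed_tsupport f).compl_mem_nhds fun h => hx (hsupp h), ?_⟩
    intro y hy z hz
    rw [image_eq_zero_of_notMem_tsupport hy, image_eq_zero_of_notMem_tsupport hz, edist_self]
    exact zero_le

lemma indicator_sub_eq_zero_of_notMem {X G : Type*} [AddGroup G] {s t : Set X} {f g : X → G}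
    (h : ∀ x ∈ s \ t, f x = g x) {x : X} (hx : x ∉ t) : s.indicator (f - g) x = 0 :=
  indicator_apply_eq_zero.2 fun hxs => sub_eq_zero.2 (h x ⟨hxs, hx⟩)

lemma tsupport_subset_closure_of_eq_zero {X G : Type*} [TopologicalSpace X] [Zero G] {t : Set X}
    {f : X → G} (h : ∀ x ∉ t, f x = 0) : tsupport f ⊆ closure t :=
  closure_mono fun x hx => by_contra fun hxt => hx (h x hxt)

lemma exists_lipschitzWith_indicator_sub {X G : Type*} [PseudoMetricSpace X] [ProperSpace X]
    [NormedAddCommGroup G] {s t : Set X} (hs : IsOpen s) (ht : IsCompact (closure t))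
    (hts : closure t ⊆ s) {f g : X → G} (hf : LocallyLipschitzOn s f)
    (hg : LocallyLipschitzOn s g) (h : ∀ x ∈ s \ t, f x = g x) :
    ∃ L, LipschitzWith L (s.indicator (f - g)) := by
  have hsupp : tsupport (s.indicator (f - g)) ⊆ closure t :=
    tsupport_subset_closure_of_eq_zero fun _ => indicator_sub_eq_zero_of_notMem h
  refine exists_lipschitzWith_of_hasCompactSupport
    (locallyLipschitz_of_tsupport_subset hs (fun x hx => ?_) (hsupp.trans hts))
    (ht.of_isClosed_subset (isClosed_tsupport _) hsupp)
  obtain ⟨L, r, hr, hL⟩ := (hf.sub hg) hx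
  refine ⟨L, r ∩ s, inter_mem hr self_mem_nhdsWithin, fun y hy z hz => ?_⟩
  rw [indicator_of_mem hy.2, indicator_of_mem hz.2]
  exact hL hy.1 hz.1

variable {E : Type*} [NormedAddCommGroup E] [NormedSpace ℝ E]

lemma exists_norm_fderiv_le_of_locallyLipschitzOn [ProperSpace E] {G : Type*}
    [NormedAddCommGroup G] [NormedSpace ℝ G] {f : E → G} {s C : Set E} (hs : IsOpen s)
    (hf : LocallyLipschitzOn s f) (hC : IsCompact C) (hCs : C ⊆ s) :
    ∃ M, ∀ x ∈ C, ‖fderiv ℝ f x‖ ≤ M := by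
  obtain ⟨δ, hδ, hδs⟩ := hC.exists_cthickening_subset_open hs hCs
  obtain ⟨L, hL⟩ := (hf.mono hδs).exists_lipschitzOnWith_of_compact hC.cthickening
  refine ⟨L, fun x hx => norm_fderiv_le_of_lipschitzOn ℝ ?_ hL⟩
  exact mem_of_superset (isOpen_thickening.mem_nhds (self_subset_thickening hδ _ hx))
    (thickening_subset_cthickening _ _)

lemma locallyLipschitzOn_of_contDiffOn {G : Type*} [NormedAddCommGroup G] [NormedSpace ℝ G]
    {f : E → G} {s : Set E} (hs : IsOpen s) (hf : ContDiffOn ℝ 1 f s) :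
    LocallyLipschitzOn s f := fun x hx => by
  obtain ⟨L, t, ht, hL⟩ := (hf.contDiffAt (hs.mem_nhds hx)).exists_lipschitzOnWith
  exact ⟨L, t, nhdsWithin_le_nhds ht, hL⟩

variable [FiniteDimensional ℝ E] [MeasurableSpace E] [BorelSpace E]
  (μ : Measure E) [μ.IsAddHaarMeasure]

/-- Rademacher's theorem is local, since null sets are. -/
lemma ae_differentiableAt_of_locallyLipschitzOn {G : Type*} [NormedAddCommGroup G]
    [NormedSpace ℝ G] [FiniteDimensional ℝ G] {f : E → G} {s : Set E} (hs : IsOpen s)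
    (hf : LocallyLipschitzOn s f) : ∀ᵐ x ∂μ, x ∈ s → DifferentiableAt ℝ f x := by
  refine measure_null_of_locally_null _ fun x hx => ?_
  have hxs : x ∈ s := by_contra fun h => hx fun h' => absurd h' h
  obtain ⟨L, t, ht, hL⟩ := hf hxs
  rw [hs.nhdsWithin_eq hxs] at ht
  have ht' : interior t ∈ 𝓝 x := interior_mem_nhds.2 ht
  refine ⟨_, inter_mem_nhdsWithin _ ht', measure_mono_null ?_ hL.ae_differentiableWithinAt_of_mem⟩
  rintro y ⟨hy, hyt⟩ hd
  exact hy fun _ => (hd (interior_subset hyt)).differentiableAt (mem_interior_iff_mem_nhds.1 hyt)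

lemma ae_fderiv_eq_zero_of_eq_zero {G : Type*} [NormedAddCommGroup G] [NormedSpace ℝ G]
    {f : E → G} {L : ℝ≥0} (hf : LipschitzWith L f) : ∀ᵐ x ∂μ, f x = 0 → fderiv ℝ f x = 0 := by
  -- `‖f‖` is differentiable a.e. and has a minimum at each zero of `f`, so `f = o(· - x)` there.
  have hnorm : LipschitzWith L fun x => ‖f x‖ := by
    simpa only [one_mul, Function.comp_def] using lipschitzWith_one_norm.comp hf
  filter_upwards [hnorm.ae_differentiableAt (μ := μ)] with x hx hfx
  have hmin : IsLocalMin (fun x => ‖f x‖) x := .of_forall fun y => by simp [hfx]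
  have hlittle := hx.hasFDerivAt
  rw [hmin.fderiv_eq_zero, hasFDerivAt_iff_isLittleO] at hlittle
  refine (HasFDerivAt.of_isLittleO ?_).fderiv
  simpa [hfx] using hlittle

end LocallyLipschitz

section Mollification

open scoped Convolution
open ContinuousLinearMap

lemma exists_seq_contDiffBump {E : Type*} [NormedAddCommGroup E] {δ : ℝ} (hδ : 0 < δ) :
    ∃ ρ : ℕ → ContDiffBump (0 : E),
      (∀ k, (ρ k).rOut ≤ δ) ∧ (∀ k, (ρ k).rOut ≤ 2 * (ρ k).rIn) ∧
      Tendsto (fun k => (ρ k).rOut) atTop (𝓝 0) := by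
  refine ⟨fun k => ⟨δ / (k + 1) / 2, δ / (k + 1), by positivity, half_lt_self (by positivity)⟩,
    fun k => div_le_self hδ.le (by simp), fun k => (mul_div_cancel₀ _ two_ne_zero).ge, ?_⟩
  simpa [div_eq_mul_inv] using
    (tendsto_one_div_add_atTop_nhds_zero_nat (𝕜 := ℝ)).const_mul δ

variable {E : Type*} [NormedAddCommGroup E] [NormedSpace ℝ E] [FiniteDimensional ℝ E]
  [MeasurableSpace E] [BorelSpace E] (μ : Measure E) [μ.IsAddHaarMeasure]
  (ρ : ContDiffBump (0 : E)) {G : Type*} [NormedAddCommGroup G] [NormedSpace ℝ G]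

/-- The mollification `ρ ⋆ f` of `f` by the bump function `ρ`, normalized to have integral one. -/
def mollify (f : E → G) : E → G := ρ.normed μ ⋆[lsmul ℝ ℝ, μ] f

lemma contDiff_mollify {f : E → G} (hf : LocallyIntegrable f μ) :
    ContDiff ℝ (⊤ : ℕ∞) (mollify μ ρ f) :=
  ρ.hasCompactSupport_normed.contDiff_convolution_left _ ρ.contDiff_normed hf

lemma tsupport_mollify_subset (f : E → G) :
    tsupport (mollify μ ρ f) ⊆ cthickening ρ.rOut (tsupport f) := by
  refine closure_minimal ((support_convolution_subset _).trans ?_) isClosed_cthickening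
  rintro _ ⟨y, hy, z, hz, rfl⟩
  rw [ρ.support_normed_eq, mem_ball_zero_iff] at hy
  refine mem_cthickening_of_dist_le _ z _ _ (subset_tsupport f hz) ?_
  simpa using hy.le

lemma norm_mollify_le {M : ℝ} {f : E → G} (hf : ∀ x, ‖f x‖ ≤ M) (x : E) :
    ‖mollify μ ρ f x‖ ≤ M := by
  calc ‖mollify μ ρ f x‖ ≤ ∫ t, ρ.normed μ t * M ∂μ := by
        refine norm_integral_le_of_norm_le (ρ.integrable_normed.mul_const M)
          (ae_of_all _ fun t => ?_)
        rw [lsmul_apply, norm_smul, Real.norm_of_nonneg (ρ.nonneg_normed t)]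
        exact mul_le_mul_of_nonneg_left (hf _) (ρ.nonneg_normed t)
    _ = M := by rw [integral_mul_const, ρ.integral_normed, one_mul]

lemma fderiv_mollify {L : ℝ≥0} {f : E → ℝ} (hf : LipschitzWith L f) :
    fderiv ℝ (mollify μ ρ f) = mollify μ ρ (fderiv ℝ f) := by
  ext1 x
  have hρ : Continuous (ρ.normed μ) := ρ.continuous_normed
  have hcont (y : E) : Continuous fun t => ρ.normed μ t * f (y - t) :=
    hρ.mul (hf.continuous.comp (continuous_const.sub continuous_id))
  refine (hasFDerivAt_integral_of_dominated_loc_of_lip (𝕜 := ℝ) (μ := μ) (s := univ)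
    (F := fun y t => ρ.normed μ t * f (y - t))
    (F' := fun t => ρ.normed μ t • fderiv ℝ f (x - t))
    (bound := fun t => ρ.normed μ t * L) univ_mem
    (.of_forall fun y => (hcont y).aestronglyMeasurable)
    ((hcont x).integrable_of_hasCompactSupport ρ.hasCompactSupport_normed.mul_right)
    ?_ ?_ (ρ.integrable_normed.mul_const _) ?_).2.fderiv
  · exact (hρ.measurable.smul ((measurable_fderiv ℝ f).comp
      (measurable_const.sub measurable_id))).aestronglyMeasurable
  · refine ae_of_all _ fun t => LipschitzOnWith.of_dist_le_mul fun y _ z _ => ?_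
    rw [Real.dist_eq, ← mul_sub, abs_mul, Real.coe_nnabs, abs_mul, mul_assoc, NNReal.abs_eq]
    gcongr
    simpa only [dist_sub_right, Real.dist_eq] using hf.dist_le_mul (y - t) (z - t)
  · filter_upwards [(quasiMeasurePreserving_sub_left μ x).ae (hf.ae_differentiableAt (μ := μ))]
      with t ht
    have hshift : HasFDerivAt (fun y => f (y - t)) (fderiv ℝ f (x - t)) x :=
      (hasFDerivAt_comp_sub t).2 ht.hasFDerivAt
    exact hshift.const_mul (ρ.normed μ t)

end Mollification

section Gradient

variable {E : Type*} [NormedAddCommGroup E] [InnerProductSpace ℝ E] [CompleteSpace E]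

lemma norm_gradient (f : E → ℝ) (x : E) : ‖gradient f x‖ = ‖fderiv ℝ f x‖ :=
  LinearIsometryEquiv.norm_map _ _

lemma gradient_eq_zero_of_notMem_tsupport {f : E → ℝ} {x : E} (hx : x ∉ tsupport f) :
    gradient f x = 0 := by
  rw [← norm_eq_zero, norm_gradient, norm_eq_zero]
  exact image_eq_zero_of_notMem_tsupport fun h => hx (tsupport_fderiv_subset ℝ h)

lemma measurable_gradient [MeasurableSpace E] [BorelSpace E] (f : E → ℝ) :
    Measurable (gradient f) :=
  (InnerProductSpace.toDual ℝ E).symm.continuous.measurable.comp (measurable_fderiv ℝ f)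

lemma add_inner_gradient_le_of_convexOn {f : E → ℝ} {s : Set E} (hf : ConvexOn ℝ s f) {x y : E}
    (hx : x ∈ s) (hy : y ∈ s) (hfx : DifferentiableAt ℝ f x) :
    f x + ⟪gradient f x, y - x⟫ ≤ f y := by
  have hline : HasDerivAt (f ∘ AffineMap.lineMap (k := ℝ) x y) (fderiv ℝ f x (y - x)) 0 := by
    refine HasFDerivAt.comp_hasDerivAt (0 : ℝ) ?_ AffineMap.hasDerivAt_lineMap
    simpa using hfx.hasFDerivAt
  have hslope := (hf.comp_affineMap (AffineMap.lineMap (k := ℝ) x y)).le_slope_of_hasDerivAt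
    (by simpa using hx) (by simpa using hy) one_pos hline
  rw [inner_gradient_left]
  simpa [slope, le_sub_iff_add_le'] using hslope

lemma setIntegral_inner_gradient_of_tsupport_subset [MeasurableSpace E] {μ : Measure E}
    {V : E → E} {f : E → ℝ} {s : Set E} (hs : tsupport f ⊆ s) :
    ∫ x in s, ⟪V x, gradient f x⟫ ∂μ = ∫ x, ⟪V x, gradient f x⟫ ∂μ :=
  setIntegral_eq_integral_of_forall_compl_eq_zero fun x hx => by
    rw [gradient_eq_zero_of_notMem_tsupport fun h => hx (hs h), inner_zero_right]

lemma integrableOn_inner_gradient [SecondCountableTopology E] [MeasurableSpace E] [BorelSpace E]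
    {μ : Measure E} {V : E → E} {f : E → ℝ} {L : ℝ≥0} {s : Set E} (hV : IntegrableOn V s μ)
    (hf : LipschitzWith L f) : IntegrableOn (fun x => ⟪V x, gradient f x⟫) s μ :=
  (innerSL ℝ).integrable_of_bilin_of_bdd_right L hV
    (measurable_gradient f).aestronglyMeasurable (ae_of_all _ fun x => by
      rw [norm_gradient]; exact norm_fderiv_le_of_lipschitz ℝ hf)

end Gradient

section Integration

lemma tendsto_integral_bilin_of_bounded {α F G H : Type*} [MeasurableSpace α] {ν : Measure α}
    [NormedAddCommGroup F] [NormedSpace ℝ F] [NormedAddCommGroup G] [NormedSpace ℝ G]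
    [NormedAddCommGroup H] [NormedSpace ℝ H] (B : F →L[ℝ] G →L[ℝ] H) {f : α → F}
    {g : ℕ → α → G} {g₀ : α → G} {M : ℝ} (hf : Integrable f ν)
    (hg : ∀ k, AEStronglyMeasurable (g k) ν) (hM : ∀ k, ∀ᵐ x ∂ν, ‖g k x‖ ≤ M)
    (hlim : ∀ᵐ x ∂ν, Tendsto (g · x) atTop (𝓝 (g₀ x))) :
    Tendsto (fun k => ∫ x, B (f x) (g k x) ∂ν) atTop (𝓝 (∫ x, B (f x) (g₀ x) ∂ν)) := by
  refine tendsto_integral_of_dominated_convergence (fun x => ‖B‖ * ‖f x‖ * M)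
    (fun k => B.aestronglyMeasurable_comp₂ hf.aestronglyMeasurable (hg k))
    ((hf.norm.const_mul _).mul_const _) (fun k => ?_) ?_
  · filter_upwards [hM k] with x hx
    exact (B.le_opNorm₂ _ _).trans (by gcongr)
  · filter_upwards [hlim] with x hx
    exact ((B (f x)).continuous.tendsto _).comp hx

variable {X : Type*} [TopologicalSpace X] [MeasurableSpace X] {μ : Measure X}

lemma setIntegral_mul_of_tsupport_subset {f g : X → ℝ} {s : Set X} (hs : tsupport g ⊆ s) :
    ∫ x in s, f x * g x ∂μ = ∫ x, f x * g x ∂μ :=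
  setIntegral_eq_integral_of_forall_compl_eq_zero fun x hx => by
    rw [image_eq_zero_of_notMem_tsupport fun h => hx (hs h), mul_zero]

lemma integrableOn_of_closure_subset {G : Type*} [NormedAddCommGroup G] {f : X → G} {s t : Set X}
    (ht : IsCompact (closure t)) (hts : closure t ⊆ s) (hf : LocallyIntegrableOn f s μ) :
    IntegrableOn f t μ :=
  (hf.integrableOn_compact_subset hts ht).mono_set subset_closure

end Integration

section WeakSolution

variable {E : Type*} [NormedAddCommGroup E] [InnerProductSpace ℝ E] [FiniteDimensional ℝ E]
  [MeasurableSpace E] [BorelSpace E] {μ : Measure E} {Ω : Set E} {A : E → E} {b : E → ℝ}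

variable (μ Ω A b) in
/-- `A` is a weak solution of `div A = b` in `Ω`: the equation holds after integration against
smooth test functions compactly supported in `Ω`. -/
def IsWeakDivSol : Prop :=
  ∀ ψ : E → ℝ, ContDiff ℝ (⊤ : ℕ∞) ψ → HasCompactSupport ψ → tsupport ψ ⊆ Ω →
    ∫ x in Ω, ⟪A x, gradient ψ x⟫ ∂μ = -∫ x in Ω, b x * ψ x ∂μ

lemma integrableOn_inner_gradient_add_mul (hΩ : IsOpen Ω) (hA : LocallyIntegrableOn A Ω μ)
    (hb : LocallyIntegrableOn b Ω μ) {w : E → ℝ} {L : ℝ≥0} (hw : LipschitzWith L w) {K : Set E}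
    (hK : IsCompact (closure K)) (hKΩ : closure K ⊆ Ω) :
    IntegrableOn (fun x => ⟪A x, gradient w x⟫ + b x * w x) K μ :=
  (integrableOn_inner_gradient (integrableOn_of_closure_subset hK hKΩ hA) hw).add
    (integrableOn_of_closure_subset hK hKΩ
      (hb.mul_continuousOn hw.continuous.continuousOn hΩ.isLocallyClosed))

variable [μ.IsAddHaarMeasure]

lemma norm_gradient_mollify_le (ρ : ContDiffBump (0 : E)) {w : E → ℝ} {L : ℝ≥0}
    (hw : LipschitzWith L w) (x : E) : ‖gradient (mollify μ ρ w) x‖ ≤ L := by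
  rw [norm_gradient, fderiv_mollify μ ρ hw]
  exact norm_mollify_le μ ρ (fun _ => norm_fderiv_le_of_lipschitz ℝ hw) x

lemma ae_tendsto_gradient_mollify {ρ : ℕ → ContDiffBump (0 : E)}
    (hρ : Tendsto (fun k => (ρ k).rOut) atTop (𝓝 0)) {C : ℝ}
    (hρC : ∀ k, (ρ k).rOut ≤ C * (ρ k).rIn) {w : E → ℝ} {L : ℝ≥0} (hw : LipschitzWith L w) :
    ∀ᵐ x ∂μ, Tendsto (fun k => gradient (mollify μ (ρ k) w) x) atTop (𝓝 (gradient w x)) := by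
  have hloc : LocallyIntegrable (fderiv ℝ w) μ :=
    (locallyIntegrable_const (L : ℝ)).mono (measurable_fderiv ℝ w).aestronglyMeasurable
      (ae_of_all _ fun x => by simpa using norm_fderiv_le_of_lipschitz ℝ hw (x₀ := x))
  filter_upwards [ContDiffBump.ae_convolution_tendsto_right_of_locallyIntegrable hρ
    (.of_forall hρC) hloc] with x hx
  refine ((InnerProductSpace.toDual ℝ E).symm.continuous.tendsto _).comp ?_
  simp only [fderiv_mollify μ _ hw]
  exact hx

lemma tendsto_setIntegral_inner_gradient_mollify {s : Set E} (hA : IntegrableOn A s μ)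
    {ρ : ℕ → ContDiffBump (0 : E)} (hρ : Tendsto (fun k => (ρ k).rOut) atTop (𝓝 0)) {C : ℝ}
    (hρC : ∀ k, (ρ k).rOut ≤ C * (ρ k).rIn) {w : E → ℝ} {L : ℝ≥0} (hw : LipschitzWith L w) :
    Tendsto (fun k => ∫ x in s, ⟪A x, gradient (mollify μ (ρ k) w) x⟫ ∂μ) atTop
      (𝓝 (∫ x in s, ⟪A x, gradient w x⟫ ∂μ)) :=
  tendsto_integral_bilin_of_bounded (innerSL ℝ) hA
    (fun _ => (measurable_gradient _).aestronglyMeasurable)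
    (fun k => ae_of_all _ (norm_gradient_mollify_le (ρ k) hw))
    (ae_restrict_of_ae (ae_tendsto_gradient_mollify hρ hρC hw))

lemma tendsto_setIntegral_mul_mollify {s : Set E} (hb : IntegrableOn b s μ)
    {ρ : ℕ → ContDiffBump (0 : E)} (hρ : Tendsto (fun k => (ρ k).rOut) atTop (𝓝 0))
    {w : E → ℝ} (hw : Continuous w) {M : ℝ} (hM : ∀ x, ‖w x‖ ≤ M) :
    Tendsto (fun k => ∫ x in s, b x * mollify μ (ρ k) w x ∂μ) atTop
      (𝓝 (∫ x in s, b x * w x ∂μ)) :=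
  tendsto_integral_bilin_of_bounded (ContinuousLinearMap.mul ℝ ℝ) hb
    (fun k => (contDiff_mollify μ (ρ k) hw.locallyIntegrable).continuous.aestronglyMeasurable)
    (fun k => ae_of_all _ (norm_mollify_le μ (ρ k) hM))
    (ae_of_all _ (ContDiffBump.convolution_tendsto_right_of_continuous hρ hw))

namespace IsWeakDivSol

lemma integral_inner_gradient_eq (h : IsWeakDivSol μ Ω A b) (hΩ : IsOpen Ω)
    (hA : LocallyIntegrableOn A Ω μ) (hb : LocallyIntegrableOn b Ω μ) {w : E → ℝ} {L : ℝ≥0}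
    (hw : LipschitzWith L w) (hs : HasCompactSupport w) (hsub : tsupport w ⊆ Ω) :
    ∫ x, ⟪A x, gradient w x⟫ ∂μ = -∫ x, b x * w x ∂μ := by
  obtain ⟨δ, hδ, hδΩ⟩ := hs.isCompact.exists_cthickening_subset_open hΩ hsub
  obtain ⟨ρ, hρδ, hρ2, hρ0⟩ := exists_seq_contDiffBump (E := E) hδ
  obtain ⟨M, hM⟩ := hs.exists_bound_of_continuous hw.continuous
  set C := cthickening δ (tsupport w)
  have hC : IsCompact C := hs.isCompact.cthickening
  have hsmooth k : ContDiff ℝ (⊤ : ℕ∞) (mollify μ (ρ k) w) :=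
    contDiff_mollify μ (ρ k) hw.continuous.locallyIntegrable
  have hsuppC k : tsupport (mollify μ (ρ k) w) ⊆ C :=
    (tsupport_mollify_subset μ (ρ k) w).trans (cthickening_mono (hρδ k) _)
  have hmollify k : ∫ x in C, ⟪A x, gradient (mollify μ (ρ k) w) x⟫ ∂μ =
      -∫ x in C, b x * mollify μ (ρ k) w x ∂μ := by
    have htest := h _ (hsmooth k) (hC.of_isClosed_subset (isClosed_tsupport _) (hsuppC k))
      ((hsuppC k).trans hδΩ)
    rwa [setIntegral_inner_gradient_of_tsupport_subset ((hsuppC k).trans hδΩ),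
      setIntegral_mul_of_tsupport_subset ((hsuppC k).trans hδΩ),
      ← setIntegral_inner_gradient_of_tsupport_subset (hsuppC k),
      ← setIntegral_mul_of_tsupport_subset (hsuppC k)] at htest
  have hwC : tsupport w ⊆ C := self_subset_cthickening _
  rw [← setIntegral_inner_gradient_of_tsupport_subset hwC,
    ← setIntegral_mul_of_tsupport_subset hwC]
  have hlim := tendsto_setIntegral_inner_gradient_mollify
    (hA.integrableOn_compact_subset hδΩ hC) hρ0 hρ2 hw
  simp only [hmollify] at hlim
  exact tendsto_nhds_unique hlim (tendsto_setIntegral_mul_mollify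
    (hb.integrableOn_compact_subset hδΩ hC) hρ0 hw.continuous hM).neg

lemma setIntegral_add_eq_zero (h : IsWeakDivSol μ Ω A b) (hΩ : IsOpen Ω)
    (hA : LocallyIntegrableOn A Ω μ) (hb : LocallyIntegrableOn b Ω μ) {K : Set E}
    (hK : IsCompact (closure K)) (hKΩ : closure K ⊆ Ω) {w : E → ℝ} {L : ℝ≥0}
    (hw : LipschitzWith L w) (hwK : ∀ x ∉ K, w x = 0) :
    ∫ x in K, (⟪A x, gradient w x⟫ + b x * w x) ∂μ = 0 := by
  have hsupp : tsupport w ⊆ closure K := tsupport_subset_closure_of_eq_zero hwK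
  have hinner : ∫ x in K, ⟪A x, gradient w x⟫ ∂μ = ∫ x, ⟪A x, gradient w x⟫ ∂μ := by
    refine setIntegral_eq_integral_of_ae_compl_eq_zero ?_
    filter_upwards [ae_fderiv_eq_zero_of_eq_zero μ hw] with x hx hxK
    rw [inner_gradient_right, hx (hwK x hxK)]
    simp
  have hmul : ∫ x in K, b x * w x ∂μ = ∫ x, b x * w x ∂μ :=
    setIntegral_eq_integral_of_forall_compl_eq_zero fun x hx => by rw [hwK x hx, mul_zero]
  rw [integral_add
    (integrableOn_inner_gradient (integrableOn_of_closure_subset hK hKΩ hA) hw)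
    (integrableOn_of_closure_subset hK hKΩ
      (hb.mul_continuousOn hw.continuous.continuousOn hΩ.isLocallyClosed)), hinner, hmul,
    h.integral_inner_gradient_eq hΩ hA hb hw (hK.of_isClosed_subset (isClosed_tsupport _) hsupp)
      (hsupp.trans hKΩ), neg_add_cancel]

end IsWeakDivSol

end WeakSolution

section ConvexLagrangian

variable {E : Type*} [NormedAddCommGroup E] [InnerProductSpace ℝ E] [FiniteDimensional ℝ E]
  [MeasurableSpace E] [BorelSpace E]

lemma locallyIntegrableOn_comp_gradient {μ : Measure E} [IsLocallyFiniteMeasure μ] {Ω : Set E}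
    (hΩ : IsOpen Ω) {u : E → ℝ} (hu : LocallyLipschitzOn Ω u) {H : Type*} [NormedAddCommGroup H]
    {g : E → H} (hg : StronglyMeasurable g)
    (hbdd : ∀ C, IsCompact C → ∃ M, ∀ ξ ∈ C, ‖g ξ‖ ≤ M) :
    LocallyIntegrableOn (fun x => g (gradient u x)) Ω μ := by
  rw [locallyIntegrableOn_iff hΩ.isLocallyClosed]
  intro C hCΩ hC
  obtain ⟨R, hR⟩ := exists_norm_fderiv_le_of_locallyLipschitzOn hΩ hu hC hCΩ
  obtain ⟨M, hM⟩ := hbdd _ (isCompact_closedBall 0 R)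
  refine Measure.integrableOn_of_bounded hC.measure_lt_top.ne
    (hg.comp_measurable (measurable_gradient u)).aestronglyMeasurable (M := M) ?_
  filter_upwards [ae_restrict_mem hC.measurableSet] with x hx
  exact hM _ (by simpa only [mem_closedBall_zero_iff, norm_gradient] using hR x hx)

lemma locallyIntegrableOn_gradient_comp_gradient {μ : Measure E} [IsLocallyFiniteMeasure μ]
    {Ω : Set E} (hΩ : IsOpen Ω) {u : E → ℝ} (hu : LocallyLipschitzOn Ω u) {G : E → ℝ}
    (hG : LocallyLipschitz G) :
    LocallyIntegrableOn (fun x => gradient G (gradient u x)) Ω μ := by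
  refine locallyIntegrableOn_comp_gradient hΩ hu (measurable_gradient G).stronglyMeasurable
    fun C hC => ?_
  simpa only [norm_gradient] using exists_norm_fderiv_le_of_locallyLipschitzOn isOpen_univ
    hG.locallyLipschitzOn hC (subset_univ C)

variable {μ : Measure E} [μ.IsAddHaarMeasure]

lemma ae_gradient_indicator_sub {Ω : Set E} (hΩ : IsOpen Ω) {f g : E → ℝ}
    (hf : LocallyLipschitzOn Ω f) (hg : LocallyLipschitzOn Ω g) :
    ∀ᵐ x ∂μ, x ∈ Ω → gradient (Ω.indicator (f - g)) x = gradient f x - gradient g x := by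
  filter_upwards [ae_differentiableAt_of_locallyLipschitzOn μ hΩ hf,
    ae_differentiableAt_of_locallyLipschitzOn μ hΩ hg] with x hfx hgx hx
  have heq : Ω.indicator (f - g) =ᶠ[𝓝 x] f - g :=
    (eqOn_indicator (s := Ω)).eventuallyEq_of_mem (hΩ.mem_nhds hx)
  rw [gradient, heq.fderiv_eq, fderiv_sub (hfx hx) (hgx hx), map_sub, gradient, gradient]

lemma integrableOn_comp_gradient_add_mul {Ω : Set E} (hΩ : IsOpen Ω) {G : E → ℝ}
    (hG : Continuous G) {b : E → ℝ} (hb : LocallyIntegrableOn b Ω μ) {f : E → ℝ}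
    (hf : LocallyLipschitzOn Ω f) {K : Set E} (hK : IsCompact (closure K))
    (hKΩ : closure K ⊆ Ω) : IntegrableOn (fun x => G (gradient f x) + f x * b x) K μ :=
  integrableOn_of_closure_subset hK hKΩ <|
    (locallyIntegrableOn_comp_gradient hΩ hf hG.stronglyMeasurable fun _ hC =>
      hC.exists_bound_of_continuousOn hG.continuousOn).add
    (hb.continuousOn_mul hf.continuousOn hΩ.isLocallyClosed)

theorem statement14_general {Ω : Set E} (hΩ : IsOpen Ω) {G : E → ℝ} (hG : ConvexOn ℝ univ G)
    (hG' : Differentiable ℝ G) {b : E → ℝ} (hb : LocallyIntegrableOn b Ω μ) {u : E → ℝ}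
    (hu : LocallyLipschitzOn Ω u)
    (hsol : IsWeakDivSol μ Ω (fun x => gradient G (gradient u x)) b) {K : Set E}
    (hK : IsCompact (closure K)) (hKΩ : closure K ⊆ Ω) {φ : E → ℝ}
    (hφ : LocallyLipschitzOn Ω φ) (hφu : ∀ x ∈ Ω \ K, φ x = u x) :
    ∫ x in K, (G (gradient u x) + u x * b x) ∂μ ≤
      ∫ x in K, (G (gradient φ x) + φ x * b x) ∂μ := by
  set w := Ω.indicator (φ - u)
  set A := fun x => gradient G (gradient u x)
  obtain ⟨L, hw⟩ : ∃ L, LipschitzWith L w :=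
    exists_lipschitzWith_indicator_sub hΩ hK hKΩ hφ hu hφu
  have hA : LocallyIntegrableOn A Ω μ :=
    locallyIntegrableOn_gradient_comp_gradient hΩ hu hG.locallyLipschitz
  have hzero : ∫ x in K, (⟪A x, gradient w x⟫ + b x * w x) ∂μ = 0 :=
    hsol.setIntegral_add_eq_zero hΩ hA hb hK hKΩ hw fun _ => indicator_sub_eq_zero_of_notMem hφu
  have htangent : ∀ᵐ x ∂μ.restrict K,
      G (gradient u x) + u x * b x + (⟪A x, gradient w x⟫ + b x * w x) ≤
        G (gradient φ x) + φ x * b x := by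
    refine ae_restrict_of_ae_restrict_of_subset (subset_closure.trans hKΩ)
      ((ae_restrict_iff' hΩ.measurableSet).2 ?_)
    filter_upwards [ae_gradient_indicator_sub hΩ hφ hu] with x hx hxΩ
    have hwx : w x = φ x - u x := indicator_of_mem hxΩ _
    rw [hx hxΩ, hwx]
    linarith [add_inner_gradient_le_of_convexOn hG (mem_univ _) (mem_univ (gradient φ x))
      (hG' (gradient u x))]
  have hcont := hG.locallyLipschitz.continuous
  have hu_int := integrableOn_comp_gradient_add_mul hΩ hcont hb hu hK hKΩ
  have hφ_int := integrableOn_comp_gradient_add_mul hΩ hcont hb hφ hK hKΩ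
  have hw_int := integrableOn_inner_gradient_add_mul hΩ hA hb hw hK hKΩ
  calc ∫ x in K, (G (gradient u x) + u x * b x) ∂μ
      = ∫ x in K, (G (gradient u x) + u x * b x + (⟪A x, gradient w x⟫ + b x * w x)) ∂μ := by
        rw [integral_add hu_int hw_int, hzero, add_zero]
    _ ≤ ∫ x in K, (G (gradient φ x) + φ x * b x) ∂μ :=
        integral_mono_ae (hu_int.add hw_int) hφ_int htangent

end ConvexLagrangian

section EnergyDensity

lemma convexOn_rpow_of_nonneg {E : Type*} [AddCommGroup E] [Module ℝ E] {s : Set E} {f : E → ℝ}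
    (hf : ConvexOn ℝ s f) (hf0 : ∀ x ∈ s, 0 ≤ f x) {p : ℝ} (hp : 1 ≤ p) :
    ConvexOn ℝ s fun x => f x ^ p := by
  refine ⟨hf.1, fun x hx y hy a b ha hb hab => ?_⟩
  calc f (a • x + b • y) ^ p ≤ (a • f x + b • f y) ^ p :=
        Real.rpow_le_rpow (hf0 _ (hf.1 hx hy ha hb hab)) (hf.2 hx hy ha hb hab) (by linarith)
    _ ≤ a • f x ^ p + b • f y ^ p := (convexOn_rpow hp).2 (hf0 x hx) (hf0 y hy) ha hb hab

lemma hasFDerivAt_rpow_zero_of_isBigO {E : Type*} [NormedAddCommGroup E] [NormedSpace ℝ E]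
    {f : E → ℝ} {x : E} (hf : f =O[𝓝 x] (· - x)) {p : ℝ} (hp : 1 < p) :
    HasFDerivAt (fun y => f y ^ p) (0 : E →L[ℝ] ℝ) x := by
  have hrpow : (fun t : ℝ => t ^ p) =o[𝓝 0] fun t => t := by
    have h := (Real.hasDerivAt_rpow_const (x := 0) (.inr hp.le)).hasFDerivAt.isLittleO
    simpa [Real.zero_rpow (sub_pos.2 hp).ne', Real.zero_rpow (one_pos.trans hp).ne'] using h
  have hfx : f x = 0 := hf.eq_zero_imp.self_of_nhds (sub_self x)
  have htendsto : Tendsto f (𝓝 x) (𝓝 0) :=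
    hf.trans_tendsto (tendsto_sub_nhds_zero_iff.2 tendsto_id)
  refine HasFDerivAt.of_isLittleO ?_
  simpa [hfx, Real.zero_rpow (one_pos.trans hp).ne', Function.comp_def] using
    (hrpow.comp_tendsto htendsto).trans_isBigO hf

namespace MinkowskiNorm

variable {n : ℕ} (N : MinkowskiNorm n) {p : ℝ}

lemma apply_zero : N.F 0 = 0 := by
  simpa using N.homog 0 le_rfl 0

lemma nonneg (ξ : En n) : 0 ≤ N.F ξ := by
  rcases eq_or_ne ξ 0 with rfl | h
  · exact N.apply_zero.ge
  · exact (N.pos ξ h).le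

lemma isBigO_nhds_zero : N.F =O[𝓝 0] fun ξ => ξ - 0 := by
  obtain ⟨L, t, ht, hL⟩ := N.convexOn.locallyLipschitz 0
  refine .of_bound L ?_
  filter_upwards [ht] with ξ hξ
  simpa [N.apply_zero, dist_eq_norm] using hL.dist_le_mul ξ hξ 0 (mem_of_mem_nhds ht)

variable (p) in
/-- The energy density `ξ ↦ F(ξ)^p / p` of the functional `J^p`. -/
def energyDensity (ξ : En n) : ℝ := 1 / p * N.F ξ ^ p

lemma convexOn_energyDensity (hp : 1 ≤ p) : ConvexOn ℝ univ (N.energyDensity p) :=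
  (convexOn_rpow_of_nonneg N.convexOn (fun ξ _ => N.nonneg ξ) hp).smul (by positivity)

lemma hasGradientAt_energyDensity (hp : 1 < p) (ξ : En n) :
    HasGradientAt (N.energyDensity p) (N.F ξ ^ (p - 1) • gradient N.F ξ) ξ := by
  rcases eq_or_ne ξ 0 with rfl | hξ
  · rw [N.apply_zero, Real.zero_rpow (sub_pos.2 hp).ne', zero_smul, hasGradientAt_iff_hasFDerivAt,
      map_zero]
    have hconst := (hasFDerivAt_rpow_zero_of_isBigO N.isBigO_nhds_zero hp).const_mul (1 / p)
    rw [smul_zero] at hconst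
    exact hconst
  · have hdiff : DifferentiableAt ℝ N.F ξ :=
      (N.smooth.contDiffAt (isOpen_compl_singleton.mem_nhds hξ)).differentiableAt (by simp)
    rw [hasGradientAt_iff_hasFDerivAt, map_smul]
    have hp0 : p ≠ 0 := by positivity
    convert! (hdiff.hasGradientAt.hasFDerivAt.rpow_const (p := p) (.inr hp.le)).const_mul (1 / p)
      using 1
    rw [smul_smul]
    field_simp

lemma isWeakDivSol_of_isWeakPSol {Ω : Set (En n)} {u : En n → ℝ} (hp : 1 < p)
    (h : IsWeakPSol N Ω p u) :
    IsWeakDivSol volume Ω (fun x => gradient (N.energyDensity p) (gradient u x))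
      (fun x => N.F (gradient u x) ^ p) := fun ψ hψ hψc hψΩ => by
  simpa only [(N.hasGradientAt_energyDensity hp _).gradient, real_inner_smul_left] using
    h ψ ⟨hψ, hψc, hψΩ⟩

lemma locallyIntegrableOn_rpow_gradient {Ω : Set (En n)} (hΩ : IsOpen Ω) {u : En n → ℝ}
    (hu : LocallyLipschitzOn Ω u) (hp : 0 ≤ p) :
    LocallyIntegrableOn (fun x => N.F (gradient u x) ^ p) Ω := by
  have hcont : Continuous fun ξ => N.F ξ ^ p :=
    N.convexOn.locallyLipschitz.continuous.rpow_const fun _ => .inr hp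
  exact locallyIntegrableOn_comp_gradient hΩ hu hcont.stronglyMeasurable fun _ hC =>
    hC.exists_bound_of_continuousOn hcont.continuousOn

end MinkowskiNorm

end EnergyDensity

/-- A `C¹` weak solution `u_p` of `div(F(∇u)^{p-1}F_ξ(∇u)) = F(∇u)^p`
in `Ω` minimizes the functional
`J^p(φ) = ∫_K ((1/p)F(∇φ)^p + φ F(∇u_p)^p)` among locally Lipschitz competitors
agreeing with `u_p` outside a precompact set. -/
theorem statement14 (n : ℕ) (N : MinkowskiNorm n)
    (Ω : Set (En n)) (hΩ : IsOpen Ω)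
    (p : ℝ) (hp : 1 < p)
    (u : En n → ℝ) (hC1 : ContDiffOn ℝ 1 u Ω)
    (hsol : IsWeakPSol N Ω p u) :
    ∀ K : Set (En n), IsCompact (closure K) → closure K ⊆ Ω →
      ∀ φ : En n → ℝ, LocLipOn φ Ω → (∀ x ∈ Ω \ K, φ x = u x) →
        (∫ x in K, ((1 / p) * N.F (gradient u x) ^ p + u x * N.F (gradient u x) ^ p)) ≤
          ∫ x in K, ((1 / p) * N.F (gradient φ x) ^ p + φ x * N.F (gradient u x) ^ p) := by
  intro K hK hKΩ φ hφ hφu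
  have hu : LocallyLipschitzOn Ω u := locallyLipschitzOn_of_contDiffOn hΩ hC1
  exact statement14_general hΩ (N.convexOn_energyDensity hp.le)
    (fun ξ => (N.hasGradientAt_energyDensity hp ξ).differentiableAt)
    (N.locallyIntegrableOn_rpow_gradient hΩ hu (by positivity)) hu
    (N.isWeakDivSol_of_isWeakPSol hp hsol) hK hKΩ hφ hφu
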